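/- arXiv:2003.02236 — 2 statements merged into one kernel-verified Lean document; each statement's English description precedes it below -/
import Mathlib

section
/- Let m ∈ ℕ and let B, P, Q be m × m real matrices with B orthogonal, i.e. Bᵀ * B = 1 and B * Bᵀ = 1. Set C = Bᵀ * P * B and D = Bᵀ * Q * B. If Q * P = 1, then for every k ≤ m, the product of the first k rows of D with the first k columns of C equals the k × k identity matrix: D_{k*} * C_{*k} = 1. -/
open Matrix

/-- **Proposition 2 (forward direction).**
If `B` is orthogonal, `C = Bᵀ P B`, `D = Bᵀ Q B` and `Q * P = 1`, then for every
`k ≤ m`, the product of the first `k` rows of `D` with the first `k` columns of `C`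
is the `k × k` identity matrix. -/
theorem prop2_forward {m : ℕ} (B P Q C D : Matrix (Fin m) (Fin m) ℝ)
    (hB1 : Bᵀ * B = 1) (hB2 : B * Bᵀ = 1)
    (hC : C = Bᵀ * P * B) (hD : D = Bᵀ * Q * B)
    (hQP : Q * P = 1) :
    ∀ (k : ℕ) (hk : k ≤ m),
      D.submatrix (Fin.castLE hk) id * C.submatrix id (Fin.castLE hk) = 1 := by
  intro k hk
  have hDC : D * C = 1 := by
    calc D * C = Bᵀ * (Q * ((B * Bᵀ) * P)) * B := by
          simp only [hC, hD, Matrix.mul_assoc]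
      _ = 1 := by rw [hB2, Matrix.one_mul, hQP, Matrix.mul_one, hB1]
  rw [← Matrix.submatrix_mul D C _ id _ Function.bijective_id, hDC]
  exact Matrix.submatrix_one _ (Fin.castLE_injective hk)
end

section
/- Let m ≥ 1 and let B, P, Q be m × m real matrices with B orthogonal, i.e. Bᵀ * B = 1 and B * Bᵀ = 1. Set C = Bᵀ * P * B and D = Bᵀ * Q * B. Then Q * P = 1 if and only if ∑_{k=1}^{m} (1/(2k)) · ‖D_{k*} * C_{*k} − I_k‖_F² = 0, where D_{k*} is the matrix of the first k rows of D, C_{*k} is the matrix of the first k columns of C, I_k is the k × k identity matrix, and ‖·‖_F is the Frobenius norm. -/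
open Matrix

/-- The Frobenius norm of a real matrix: the square root of the sum of the
squares of its entries. -/
noncomputable def frobeniusNorm {a b : ℕ} (A : Matrix (Fin a) (Fin b) ℝ) : ℝ :=
  Real.sqrt (∑ i, ∑ j, (A i j) ^ 2)

theorem frobeniusNorm_eq_zero_iff {a b : ℕ} (A : Matrix (Fin a) (Fin b) ℝ) :
    frobeniusNorm A = 0 ↔ A = 0 := by
  have hrow : ∀ i, 0 ≤ ∑ j, (A i j) ^ 2 := fun i => Finset.sum_nonneg fun j _ => sq_nonneg _
  rw [frobeniusNorm, Real.sqrt_eq_zero (Finset.sum_nonneg fun i _ => hrow i),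
    Finset.sum_eq_zero_iff_of_nonneg fun i _ => hrow i]
  simp only [Finset.sum_eq_zero_iff_of_nonneg fun _ _ => sq_nonneg _, Finset.mem_univ,
    true_implies, pow_eq_zero_iff two_ne_zero, ← Matrix.ext_iff, Matrix.zero_apply]

/-- Conjugating both factors by an orthogonal matrix preserves being a left inverse. -/
theorem conj_mul_conj_eq_one_iff {n : Type*} [Fintype n] [DecidableEq n]
    {B : Matrix n n ℝ} (P Q : Matrix n n ℝ) (hB1 : Bᵀ * B = 1) (hB2 : B * Bᵀ = 1) :
    (Bᵀ * Q * B) * (Bᵀ * P * B) = 1 ↔ Q * P = 1 := by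
  have hconj : (Bᵀ * Q * B) * (Bᵀ * P * B) = Bᵀ * (Q * P) * B := by
    calc (Bᵀ * Q * B) * (Bᵀ * P * B) = Bᵀ * Q * (B * Bᵀ) * P * B := by
          simp only [Matrix.mul_assoc]
      _ = Bᵀ * (Q * P) * B := by rw [hB2, Matrix.mul_one, Matrix.mul_assoc Bᵀ]
  rw [hconj]
  constructor
  · intro h
    calc Q * P = (B * Bᵀ) * (Q * P) * (B * Bᵀ) := by rw [hB2, Matrix.one_mul, Matrix.mul_one]
      _ = B * (Bᵀ * (Q * P) * B) * Bᵀ := by simp only [Matrix.mul_assoc]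
      _ = 1 := by rw [h, Matrix.mul_one, hB2]
  · intro h
    rw [h, Matrix.mul_one, hB1]

/-- A product is the identity iff all its leading principal blocks are. -/
theorem mul_eq_one_iff_forall_leading_block {m : ℕ} (C D : Matrix (Fin m) (Fin m) ℝ) :
    D * C = 1 ↔ ∀ k : Fin m,
      D.submatrix (Fin.castLE k.isLt) id * C.submatrix id (Fin.castLE k.isLt) = 1 := by
  have hblock : ∀ k : Fin m,
      D.submatrix (Fin.castLE k.isLt) id * C.submatrix id (Fin.castLE k.isLt) =
        (D * C).submatrix (Fin.castLE k.isLt) (Fin.castLE k.isLt) := fun _ => rfl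
  simp only [hblock]
  constructor
  · intro h k
    rw [h, Matrix.submatrix_one _ (Fin.castLE_injective _)]
  · intro h
    ext i j
    have hi : (i : ℕ) < (max i j : Fin m) + 1 := Nat.lt_succ_of_le (le_max_left i j)
    have hj : (j : ℕ) < (max i j : Fin m) + 1 := Nat.lt_succ_of_le (le_max_right i j)
    have hij := congrFun (congrFun (h (max i j)) ⟨i, hi⟩) ⟨j, hj⟩
    simpa [Matrix.one_apply, Fin.ext_iff] using hij

/-- **Proposition 2 of the paper.**
For `m ≥ 1`, `B` orthogonal, `C = Bᵀ P B`, `D = Bᵀ Q B`, consistency `Q * P = 1`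
holds iff `∑_{k=1}^{m} (1/(2k)) ‖D_{k*} C_{*k} - I_k‖_F² = 0`. -/
theorem prop2_full {m : ℕ} (hm : 1 ≤ m) (B P Q C D : Matrix (Fin m) (Fin m) ℝ)
    (hB1 : Bᵀ * B = 1) (hB2 : B * Bᵀ = 1)
    (hC : C = Bᵀ * P * B) (hD : D = Bᵀ * Q * B) :
    Q * P = 1 ↔
      ∑ k : Fin m, (1 / (2 * ((k : ℕ) + 1 : ℝ))) *
        (frobeniusNorm
          (D.submatrix (Fin.castLE k.isLt) id *
            C.submatrix id (Fin.castLE k.isLt) - 1)) ^ 2 = 0 := by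
  rw [← conj_mul_conj_eq_one_iff P Q hB1 hB2, ← hC, ← hD, mul_eq_one_iff_forall_leading_block,
    Finset.sum_eq_zero_iff_of_nonneg fun k _ => by positivity]
  refine forall_congr' fun k => ?_
  have hk : (1 / (2 * ((k : ℕ) + 1 : ℝ))) ≠ 0 := by positivity
  simp only [Finset.mem_univ, true_implies, mul_eq_zero, hk, false_or,
    pow_eq_zero_iff two_ne_zero]
  rw [frobeniusNorm_eq_zero_iff, sub_eq_zero]
end
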